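/- (Desequentialization) For every named GS4 derivation P with conclusion ⊢Γ, the branch-labeled axiom graph ⟨⟨P⟩⟩ is total with respect to ⊢Γ. -/

import Mathlib

open scoped Classical

noncomputable section

namespace GS4

/-- Named classical propositional formulas over atoms `α`, with names in `ℕ`. -/
inductive NForm (α : Type) : Type
  | atom : ℕ → α → NForm α
  | or   : NForm α → NForm α → NForm α
  | and  : NForm α → NForm α → NForm α

variable {α : Type}

/-- Name-preserving De Morgan negation, w.r.t. an involution `bar` on atoms. -/
def negF (bar : α → α) : NForm α → NForm α
  | .atom x a => .atom x (bar a)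
  | .or A B => .and (negF bar A) (negF bar B)
  | .and A B => .or (negF bar A) (negF bar B)

/-- The set of names occurring in a named formula. -/
def NForm.names : NForm α → Set ℕ
  | .atom x _ => {x}
  | .or A B => A.names ∪ B.names
  | .and A B => A.names ∪ B.names

/-- A named formula is sharing-free if every name occurs at most once in it. -/
def NForm.sharingFree : NForm α → Prop
  | .atom _ _ => True
  | .or A B => A.sharingFree ∧ B.sharingFree ∧ Disjoint A.names B.names
  | .and A B => A.sharingFree ∧ B.sharingFree ∧ Disjoint A.names B.names

def NForm.isAtom : NForm α → Prop
  | .atom _ _ => True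
  | _ => False

/-- Anonymous formulas (shapes): `A ≡ B` iff their shapes coincide. -/
inductive Shape (α : Type) : Type
  | atom : α → Shape α
  | or   : Shape α → Shape α → Shape α
  | and  : Shape α → Shape α → Shape α

def NForm.shape : NForm α → Shape α
  | .atom _ a => .atom a
  | .or A B => .or A.shape B.shape
  | .and A B => .and A.shape B.shape

/-- `HasAtom A x a`: the atomic formula `x:a` occurs in `A`. -/
def HasAtom : NForm α → ℕ → α → Prop
  | .atom y b, x, a => y = x ∧ b = a
  | .or A B, x, a => HasAtom A x a ∨ HasAtom B x a
  | .and A B, x, a => HasAtom A x a ∨ HasAtom B x a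

/-- Names of a finite set of named formulas. -/
def snames (Γ : Finset (NForm α)) : Set ℕ := ⋃ A ∈ Γ, A.names

/-- A finite set of named formulas is sharing-free if all its elements are
sharing-free with pairwise disjoint name sets. -/
def SFSet (Γ : Finset (NForm α)) : Prop :=
  (∀ A ∈ Γ, A.sharingFree) ∧
  ∀ A ∈ Γ, ∀ B ∈ Γ, A ≠ B → Disjoint A.names B.names

/-- `x:a` occurs in some formula of `Γ` (i.e. `Γ[x] = a` for sharing-free `Γ`). -/
def HasAtomS (Γ : Finset (NForm α)) (x : ℕ) (a : α) : Prop :=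
  ∃ A ∈ Γ, HasAtom A x a

/-- Branch sets of named formulas. -/
def BrF : NForm α → Set (Set ℕ)
  | .atom x _ => {{x}}
  | .or A B => {X | ∃ Y ∈ BrF A, ∃ Z ∈ BrF B, X = Y ∪ Z}
  | .and A B => BrF A ∪ BrF B

/-- Branch sets of sequents (finite sharing-free sets of named formulas). -/
def BrS (Γ : Finset (NForm α)) : Set (Set ℕ) :=
  {X | X ⊆ snames Γ ∧ ∀ A ∈ Γ, X ∩ A.names ∈ BrF A}

/-! ## Branch-labeled name graphs -/

/-- A branch-labeled name graph: vertices and a relation between unordered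
pairs of vertices and branch labels. -/
structure BLGraph : Type where
  verts : Set ℕ
  rel : Sym2 ℕ → Set ℕ → Prop

/-- Well-formedness of a bl-graph: related pairs consist of distinct vertices,
labels are sets of vertices, and each edge is included in its labels. -/
def BLGraph.IsBL (G : BLGraph) : Prop :=
  ∀ e X, G.rel e X → ¬ e.IsDiag ∧ X ⊆ G.verts ∧ ∀ v ∈ e, v ∈ X

def BLGraph.Edges (G : BLGraph) : Set (Sym2 ℕ) := {e | ∃ X, G.rel e X}

def BLGraph.Br (G : BLGraph) : Set (Set ℕ) := {X | ∃ e, G.rel e X}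

def BLGraph.union (G H : BLGraph) : BLGraph :=
  ⟨G.verts ∪ H.verts, fun e X => G.rel e X ∨ H.rel e X⟩

/-- Restriction `G↾_S` of a bl-graph. -/
def BLGraph.restrict (G : BLGraph) (S : Set ℕ) : BLGraph :=
  ⟨G.verts ∩ S, fun e X => G.rel e X ∧ X ⊆ S⟩

/-- The interface-relativized edge-branch relation `e ⊰^I_G X`. -/
def BLGraph.relI (G : BLGraph) (I : Set ℕ) (e : Sym2 ℕ) (X : Set ℕ) : Prop :=
  ∃ Y, G.rel e Y ∧ X = Y \ I

/-- `z 0, …, z (n-1)` is an `X`-labeled alternating path between `G` and `H`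
through the interface `I`. -/
def AltPath (G H : BLGraph) (I X : Set ℕ) (n : ℕ) (z : ℕ → ℕ) : Prop :=
  1 < n ∧
  (∀ i < n, ∀ j < n, z i = z j → i = j) ∧
  (∀ i, 0 < i → i + 1 < n → z i ∈ I) ∧
  ((∀ i, i + 1 < n →
      (Even i → G.relI I s(z i, z (i + 1)) X) ∧ (¬ Even i → H.relI I s(z i, z (i + 1)) X)) ∨
   (∀ i, i + 1 < n →
      (Even i → H.relI I s(z i, z (i + 1)) X) ∧ (¬ Even i → G.relI I s(z i, z (i + 1)) X)))

/-- Composition of bl-graphs over an interface `I`. -/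
def BLGraph.comp (G H : BLGraph) (I : Set ℕ) : BLGraph :=
  ⟨(G.verts ∪ H.verts) \ I,
   fun e X => ∃ n z, AltPath G H I X n z ∧ z 0 ∉ I ∧ z (n - 1) ∉ I ∧
     e = s(z 0, z (n - 1))⟩

/-- The weakening operator on bl-graphs: add vertices `V` and extend every
branch label by a member of `Brs`. -/
def blwk (V : Set ℕ) (Brs : Set (Set ℕ)) (G : BLGraph) : BLGraph :=
  ⟨G.verts ∪ V, fun e X => ∃ Y Z, G.rel e Y ∧ Z ∈ Brs ∧ X = Y ∪ Z⟩

/-- The bl-identity graph `id_{A,C}` on a pair of dual formulas. -/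
def blid : NForm α → NForm α → BLGraph
  | .atom x _, .atom y _ => ⟨{x, y}, fun e X => e = s(x, y) ∧ X = {x, y}⟩
  | .or A1 A2, .and C1 C2 =>
      (blwk A2.names (BrF A2) (blid A1 C1)).union (blwk A1.names (BrF A1) (blid A2 C2))
  | .and A1 A2, .or C1 C2 =>
      (blwk C2.names (BrF C2) (blid A1 C1)).union (blwk C1.names (BrF C1) (blid A2 C2))
  | _, _ => ⟨∅, fun _ _ => False⟩

/-! ## Simple name graphs -/

/-- A simple name graph. -/
structure NGraph : Type where
  verts : Set ℕ
  edges : Set (Sym2 ℕ)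

/-- Subgraph relation `H ⊑ G`. -/
def NGraph.Sub (H G : NGraph) : Prop := H.verts ⊆ G.verts ∧ H.edges ⊆ G.edges

def NGraph.union (G H : NGraph) : NGraph := ⟨G.verts ∪ H.verts, G.edges ∪ H.edges⟩

/-- Induced subgraph `G↾_S`. -/
def NGraph.restrict (G : NGraph) (S : Set ℕ) : NGraph :=
  ⟨G.verts ∩ S, {e ∈ G.edges | ∀ v ∈ e, v ∈ S}⟩

/-- Alternating paths between simple name graphs through an interface. -/
def NAltPath (G H : NGraph) (I : Set ℕ) (n : ℕ) (z : ℕ → ℕ) : Prop :=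
  0 < n ∧
  (∀ i < n, ∀ j < n, z i = z j → i = j) ∧
  (∀ i, 0 < i → i + 1 < n → z i ∈ I) ∧
  ((∀ i, i + 1 < n →
      (Even i → s(z i, z (i + 1)) ∈ G.edges) ∧ (¬ Even i → s(z i, z (i + 1)) ∈ H.edges)) ∨
   (∀ i, i + 1 < n →
      (Even i → s(z i, z (i + 1)) ∈ H.edges) ∧ (¬ Even i → s(z i, z (i + 1)) ∈ G.edges)))

/-- Composition of simple name graphs over an interface. -/
def NGraph.comp (G H : NGraph) (I : Set ℕ) : NGraph :=
  ⟨(G.verts ∪ H.verts) \ I,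
   {e | ∃ x y, x ≠ y ∧ x ∈ (G.verts ∪ H.verts) \ I ∧ y ∈ (G.verts ∪ H.verts) \ I ∧
        e = s(x, y) ∧ ∃ n z, NAltPath G H I n z ∧ z 0 = x ∧ z (n - 1) = y}⟩

/-- The identity graph `Id_{A,C}` on a pair of dual formulas. -/
def idg : NForm α → NForm α → NGraph
  | .atom x _, .atom y _ => ⟨{x, y}, {s(x, y)}⟩
  | .or A1 A2, .and C1 C2 => (idg A1 C1).union (idg A2 C2)
  | .and A1 A2, .or C1 C2 => (idg A1 C1).union (idg A2 C2)
  | _, _ => ⟨∅, ∅⟩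

/-- The edgeless (weakening) graph on the names of `Γ`. -/
def wkg (Γ : Finset (NForm α)) : NGraph := ⟨snames Γ, ∅⟩

/-! ## Named GS4 derivations -/

/-- Named GS4 derivation trees. -/
inductive Deriv (α : Type) : Type
  | ax (Γ : Finset (NForm α)) (A C : NForm α)
  | cut (A : NForm α) (P Q : Deriv α)
  | sup (P Q : Deriv α)
  | orI (A B : NForm α) (P : Deriv α)
  | andI (A B : NForm α) (P Q : Deriv α)

/-- Conclusion of a derivation tree. -/
def concl : Deriv α → Finset (NForm α)
  | .ax Γ A C => insert A (insert C Γ)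
  | .cut A P _ => (concl P).erase A
  | .sup P _ => concl P
  | .orI A B P => insert (NForm.or A B) (((concl P).erase A).erase B)
  | .andI A B P _ => insert (NForm.and A B) ((concl P).erase A)

/-- Well-formedness of derivation trees w.r.t. the atom involution `bar`:
each rule is applied correctly to sharing-free named sequents. -/
def WF (bar : α → α) : Deriv α → Prop
  | .ax Γ A C =>
      A.shape = (negF bar C).shape ∧
      A.sharingFree ∧ C.sharingFree ∧ SFSet Γ ∧
      Disjoint A.names C.names ∧
      Disjoint A.names (snames Γ) ∧ Disjoint C.names (snames Γ)
  | .cut A P Q =>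
      WF bar P ∧ WF bar Q ∧
      ∃ Γ : Finset (NForm α), A ∉ Γ ∧ negF bar A ∉ Γ ∧
        concl P = insert A Γ ∧ concl Q = insert (negF bar A) Γ ∧
        A.sharingFree ∧ SFSet Γ ∧ Disjoint A.names (snames Γ)
  | .sup P Q => WF bar P ∧ WF bar Q ∧ concl P = concl Q
  | .orI A B P =>
      WF bar P ∧
      ∃ Γ : Finset (NForm α), A ∉ Γ ∧ B ∉ Γ ∧ A ≠ B ∧
        concl P = insert A (insert B Γ) ∧
        A.sharingFree ∧ B.sharingFree ∧ SFSet Γ ∧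
        Disjoint A.names B.names ∧
        Disjoint A.names (snames Γ) ∧ Disjoint B.names (snames Γ)
  | .andI A B P Q =>
      WF bar P ∧ WF bar Q ∧
      ∃ Γ : Finset (NForm α), A ∉ Γ ∧ B ∉ Γ ∧
        concl P = insert A Γ ∧ concl Q = insert B Γ ∧
        A.sharingFree ∧ B.sharingFree ∧ SFSet Γ ∧
        Disjoint A.names B.names ∧
        Disjoint A.names (snames Γ) ∧ Disjoint B.names (snames Γ)

/-- A derivation is cut-free if it contains no cut rule. -/
def CutFree : Deriv α → Prop
  | .ax _ _ _ => True
  | .cut _ _ _ => False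
  | .sup P Q => CutFree P ∧ CutFree Q
  | .orI _ _ P => CutFree P
  | .andI _ _ P Q => CutFree P ∧ CutFree Q

/-- The branch-labeled axiom graph `⟨⟨P⟩⟩` of a derivation. -/
def blaxg : Deriv α → BLGraph
  | .ax Γ A C => blwk (snames Γ) (BrS Γ) (blid A C)
  | .cut A P Q => BLGraph.comp (blaxg P) (blaxg Q) A.names
  | .sup P Q => (blaxg P).union (blaxg Q)
  | .orI _ _ P => blaxg P
  | .andI _ _ P Q => (blaxg P).union (blaxg Q)

/-- The (simple) axiom graph `⟦P⟧` of a derivation. -/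
def axg : Deriv α → NGraph
  | .ax Γ A C => (wkg Γ).union (idg A C)
  | .cut A P Q => NGraph.comp (axg P) (axg Q) A.names
  | .sup P Q => (axg P).union (axg Q)
  | .orI _ _ P => axg P
  | .andI _ _ P Q => (axg P).union (axg Q)

/-! ## Inversion and isolation -/

/-- Inversion of a disjunction `D ∨ E` in the conclusion. -/
def inv (D E : NForm α) : Deriv α → Deriv α
  | .ax Γ A C =>
      if A = NForm.or D E then
        match C with
        | .and C1 C2 =>
            .andI C1 C2 (.ax (insert E Γ) D C1) (.ax (insert D Γ) E C2)
        | _ => .ax Γ A C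
      else if C = NForm.or D E then
        match A with
        | .and A1 A2 =>
            .andI A1 A2 (.ax (insert E Γ) A1 D) (.ax (insert D Γ) A2 E)
        | _ => .ax Γ A C
      else
        .ax (insert D (insert E (Γ.erase (NForm.or D E)))) A C
  | .cut A P Q => .cut A (inv D E P) (inv D E Q)
  | .sup P Q => .sup (inv D E P) (inv D E Q)
  | .orI A B P => if A = D ∧ B = E then P else .orI A B (inv D E P)
  | .andI A B P Q => .andI A B (inv D E P) (inv D E Q)

/-- Left inversion of a conjunction `D ∧ E` in the conclusion. -/
def invl (D E : NForm α) : Deriv α → Deriv α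
  | .ax Γ A C =>
      if A = NForm.and D E then
        match C with
        | .or C1 C2 => .orI C1 C2 (.ax (insert C2 Γ) D C1)
        | _ => .ax Γ A C
      else if C = NForm.and D E then
        match A with
        | .or A1 A2 => .orI A1 A2 (.ax (insert A2 Γ) A1 D)
        | _ => .ax Γ A C
      else
        .ax (insert D (Γ.erase (NForm.and D E))) A C
  | .cut A P Q => .cut A (invl D E P) (invl D E Q)
  | .sup P Q => .sup (invl D E P) (invl D E Q)
  | .orI A B P => .orI A B (invl D E P)
  | .andI A B P Q => if A = D ∧ B = E then P else .andI A B (invl D E P) (invl D E Q)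

/-- Right inversion of a conjunction `D ∧ E` in the conclusion. -/
def invr (D E : NForm α) : Deriv α → Deriv α
  | .ax Γ A C =>
      if A = NForm.and D E then
        match C with
        | .or C1 C2 => .orI C1 C2 (.ax (insert C1 Γ) E C2)
        | _ => .ax Γ A C
      else if C = NForm.and D E then
        match A with
        | .or A1 A2 => .orI A1 A2 (.ax (insert A1 Γ) A2 E)
        | _ => .ax Γ A C
      else
        .ax (insert E (Γ.erase (NForm.and D E))) A C
  | .cut A P Q => .cut A (invr D E P) (invr D E Q)
  | .sup P Q => .sup (invr D E P) (invr D E Q)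
  | .orI A B P => .orI A B (invr D E P)
  | .andI A B P Q => if A = D ∧ B = E then Q else .andI A B (invr D E P) (invr D E Q)

/-- Isolation of a non-atomic formula in the conclusion. -/
def isl : NForm α → Deriv α → Deriv α
  | .or A B, P => .orI A B (inv A B P)
  | .and A B, P => .andI A B (invl A B P) (invr A B P)
  | .atom _ _, P => P

/-- Totality of a bl-graph w.r.t. a sharing-free named sequent. -/
def Total (bar : α → α) (G : BLGraph) (Γ : Finset (NForm α)) : Prop :=
  G.verts = snames Γ ∧
  G.Br = BrS Γ ∧
  ∀ x y : ℕ, s(x, y) ∈ G.Edges →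
    ∀ a b : α, HasAtomS Γ x a → HasAtomS Γ y b → a = bar b

end GS4

namespace GS4

variable {α : Type}

/-! ### Names, atoms and branches -/

theorem snames_insert (A : NForm α) (Γ : Finset (NForm α)) :
    snames (insert A Γ) = A.names ∪ snames Γ := by
  simp [snames]

theorem names_subset_snames {A : NForm α} {Γ : Finset (NForm α)} (h : A ∈ Γ) :
    A.names ⊆ snames Γ :=
  Set.subset_biUnion_of_mem (u := fun A : NForm α => A.names) h

theorem names_negF (bar : α → α) (A : NForm α) : (negF bar A).names = A.names := by
  induction A with
  | atom x a => rfl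
  | or A B ihA ihB => simp [negF, NForm.names, ihA, ihB]
  | and A B ihA ihB => simp [negF, NForm.names, ihA, ihB]

theorem mem_names_iff_hasAtom (A : NForm α) (x : ℕ) : x ∈ A.names ↔ ∃ a, HasAtom A x a := by
  induction A with
  | atom y b => simp [NForm.names, HasAtom, eq_comm]
  | or A B ihA ihB => simp [NForm.names, HasAtom, ihA, ihB, exists_or]
  | and A B ihA ihB => simp [NForm.names, HasAtom, ihA, ihB, exists_or]

theorem mem_snames_iff_hasAtomS (Γ : Finset (NForm α)) (x : ℕ) :
    x ∈ snames Γ ↔ ∃ a, HasAtomS Γ x a := by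
  simp only [snames, Set.mem_iUnion, mem_names_iff_hasAtom, HasAtomS]
  constructor
  · rintro ⟨A, hA, a, h⟩
    exact ⟨a, A, hA, h⟩
  · rintro ⟨a, A, hA, h⟩
    exact ⟨A, hA, a, h⟩

theorem HasAtom.mem_names {A : NForm α} {x : ℕ} {a : α} (h : HasAtom A x a) : x ∈ A.names :=
  (mem_names_iff_hasAtom A x).2 ⟨a, h⟩

theorem HasAtom.negF (bar : α → α) {A : NForm α} {x : ℕ} {a : α} (h : HasAtom A x a) :
    HasAtom (negF bar A) x (bar a) := by
  induction A with
  | atom y b => exact ⟨h.1, congrArg bar h.2⟩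
  | or A B ihA ihB => exact h.imp ihA ihB
  | and A B ihA ihB => exact h.imp ihA ihB

theorem NForm.sharingFree_negF (bar : α → α) {A : NForm α} (h : A.sharingFree) :
    (GS4.negF bar A).sharingFree := by
  induction A with
  | atom y b => trivial
  | or A B ihA ihB => exact ⟨ihA h.1, ihB h.2.1, by simpa only [names_negF] using h.2.2⟩
  | and A B ihA ihB => exact ⟨ihA h.1, ihB h.2.1, by simpa only [names_negF] using h.2.2⟩

theorem HasAtom.unique {A : NForm α} (hA : A.sharingFree) {x : ℕ} {a b : α}
    (ha : HasAtom A x a) (hb : HasAtom A x b) : a = b := by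
  induction A with
  | atom y c => exact ha.2.symm.trans hb.2
  | or A B ihA ihB | and A B ihA ihB =>
    rcases ha with ha | ha <;> rcases hb with hb | hb
    · exact ihA hA.1 ha hb
    · exact (Set.disjoint_left.1 hA.2.2 ha.mem_names hb.mem_names).elim
    · exact (Set.disjoint_left.1 hA.2.2 hb.mem_names ha.mem_names).elim
    · exact ihB hA.2.1 ha hb

theorem HasAtomS.unique {Γ : Finset (NForm α)} (hΓ : SFSet Γ) {x : ℕ} {a b : α}
    (ha : HasAtomS Γ x a) (hb : HasAtomS Γ x b) : a = b := by
  obtain ⟨A, hA, ha⟩ := ha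
  obtain ⟨B, hB, hb⟩ := hb
  by_cases h : A = B
  · subst h
    exact HasAtom.unique (hΓ.1 A hA) ha hb
  · exact (Set.disjoint_left.1 (hΓ.2 A hA B hB h) ha.mem_names hb.mem_names).elim

theorem HasAtomS.mono {Γ Δ : Finset (NForm α)} (h : Γ ⊆ Δ) {x : ℕ} {a : α}
    (ha : HasAtomS Γ x a) : HasAtomS Δ x a := by
  obtain ⟨A, hA, ha⟩ := ha
  exact ⟨A, h hA, ha⟩

theorem SFSet.insert {A : NForm α} {Γ : Finset (NForm α)} (hA : A.sharingFree) (hΓ : SFSet Γ)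
    (hd : Disjoint A.names (snames Γ)) : SFSet (insert A Γ) := by
  have key : ∀ B ∈ Γ, Disjoint A.names B.names := fun B hB =>
    hd.mono_right (names_subset_snames hB)
  constructor
  · intro B hB
    rcases Finset.mem_insert.1 hB with rfl | hB
    · exact hA
    · exact hΓ.1 B hB
  · intro B hB C hC hne
    rcases Finset.mem_insert.1 hB with hBA | hBΓ <;>
      rcases Finset.mem_insert.1 hC with hCA | hCΓ
    · exact (hne (hBA.trans hCA.symm)).elim
    · exact hBA ▸ key C hCΓ
    · exact hCA ▸ (key B hBΓ).symm
    · exact hΓ.2 B hBΓ C hCΓ hne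

theorem subset_names_of_mem_BrF {A : NForm α} {X : Set ℕ} (h : X ∈ BrF A) : X ⊆ A.names := by
  induction A generalizing X with
  | atom y c => exact (Set.mem_singleton_iff.1 h).subset
  | or A B ihA ihB =>
    obtain ⟨Y, hY, Z, hZ, rfl⟩ := h
    exact Set.union_subset_union (ihA hY) (ihB hZ)
  | and A B ihA ihB =>
    rcases h with h | h
    · exact (ihA h).trans Set.subset_union_left
    · exact (ihB h).trans Set.subset_union_right

/-- Every set of names contains a branch of `A`, or avoids some branch of its negation. -/
theorem exists_branch_subset_or_compl (bar : α → α) (A : NForm α) (S : Set ℕ) :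
    (∃ Y ∈ BrF A, Y ⊆ S) ∨ ∃ Z ∈ BrF (negF bar A), Z ⊆ Sᶜ := by
  induction A with
  | atom x a =>
    by_cases h : x ∈ S
    · exact .inl ⟨{x}, rfl, Set.singleton_subset_iff.2 h⟩
    · exact .inr ⟨{x}, rfl, Set.singleton_subset_iff.2 h⟩
  | or A B ihA ihB =>
    rcases ihA with ⟨Y, hY, hYS⟩ | ⟨Y, hY, hYS⟩
    · rcases ihB with ⟨Z, hZ, hZS⟩ | ⟨Z, hZ, hZS⟩
      · exact .inl ⟨Y ∪ Z, ⟨Y, hY, Z, hZ, rfl⟩, Set.union_subset hYS hZS⟩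
      · exact .inr ⟨Z, .inr hZ, hZS⟩
    · exact .inr ⟨Y, .inl hY, hYS⟩
  | and A B ihA ihB =>
    rcases ihA with ⟨Y, hY, hYS⟩ | ⟨Y, hY, hYS⟩
    · exact .inl ⟨Y, .inl hY, hYS⟩
    · rcases ihB with ⟨Z, hZ, hZS⟩ | ⟨Z, hZ, hZS⟩
      · exact .inl ⟨Z, .inr hZ, hZS⟩
      · exact .inr ⟨Y ∪ Z, ⟨Y, hY, Z, hZ, rfl⟩, Set.union_subset hYS hZS⟩

theorem mem_BrS_insert {A : NForm α} {Γ : Finset (NForm α)}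
    (hd : Disjoint A.names (snames Γ)) {X : Set ℕ} :
    X ∈ BrS (insert A Γ) ↔ ∃ Y ∈ BrF A, ∃ Z ∈ BrS Γ, X = Y ∪ Z := by
  constructor
  · rintro ⟨hX, hB⟩
    rw [snames_insert] at hX
    refine ⟨X ∩ A.names, hB A (Finset.mem_insert_self A Γ), X ∩ snames Γ,
      ⟨Set.inter_subset_right, fun B hBΓ => ?_⟩, ?_⟩
    · rw [Set.inter_assoc, Set.inter_eq_right.2 (names_subset_snames hBΓ)]
      exact hB B (Finset.mem_insert_of_mem hBΓ)
    · rw [← Set.inter_union_distrib_left, Set.inter_eq_left.2 hX]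
  · rintro ⟨Y, hY, Z, ⟨hZ, hB⟩, rfl⟩
    have hYA := subset_names_of_mem_BrF hY
    refine ⟨?_, fun B hBΓ => ?_⟩
    · rw [snames_insert]
      exact Set.union_subset_union hYA hZ
    · rw [Set.union_inter_distrib_right]
      rcases Finset.mem_insert.1 hBΓ with rfl | hBΓ
      · rw [Set.inter_eq_left.2 hYA, ((hd.mono_right hZ).symm).inter_eq, Set.union_empty]
        exact hY
      · rw [(hd.mono hYA (names_subset_snames hBΓ)).inter_eq, Set.empty_union]
        exact hB B hBΓ

/-! ### Alternating paths -/

/-- A directed walk of `n` steps which starts outside `I` and stays in `I` before its end. -/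
def IsWalkThrough (D : ℕ → ℕ → Prop) (I : Set ℕ) (n : ℕ) (z : ℕ → ℕ) : Prop :=
  z 0 ∉ I ∧ (∀ i, 0 < i → i < n → z i ∈ I) ∧ ∀ i < n, D (z i) (z (i + 1))

theorem IsWalkThrough.extend {D : ℕ → ℕ → Prop} {I : Set ℕ} {n : ℕ} {z : ℕ → ℕ} {v : ℕ}
    (hz : IsWalkThrough D I n z) (hn : 0 < n → z n ∈ I) (hv : D (z n) v) :
    IsWalkThrough D I (n + 1) (Function.update z (n + 1) v) := by
  obtain ⟨h0, hI, hD⟩ := hz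
  have hup : ∀ i ≤ n, Function.update z (n + 1) v i = z i := fun i hi =>
    Function.update_of_ne (by omega) _ _
  refine ⟨by rwa [hup 0 (by omega)], fun i h1 h2 => ?_, fun i hi => ?_⟩
  · rw [hup i (by omega)]
    rcases Nat.lt_succ_iff_lt_or_eq.1 h2 with h | rfl
    · exact hI i h1 h
    · exact hn h1
  · rw [hup i (by omega)]
    rcases Nat.lt_succ_iff_lt_or_eq.1 hi with h | rfl
    · rw [hup (i + 1) h]
      exact hD i h
    · rwa [Function.update_self]

/-- A repetition between positions `i < j` of a walk can be cut out. -/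
theorem IsWalkThrough.splice {D : ℕ → ℕ → Prop} {I : Set ℕ} {n : ℕ} {z : ℕ → ℕ} {i j : ℕ}
    (hz : IsWalkThrough D I n z) (hij : i < j) (hj : j ≤ n) (heq : z i = z j) :
    IsWalkThrough D I (n - (j - i)) (fun k => if k ≤ i then z k else z (k + (j - i))) := by
  obtain ⟨h0, hI, hD⟩ := hz
  refine ⟨by simpa using h0, fun k h1 h2 => ?_, fun k hk => ?_⟩
  · dsimp only
    split_ifs with h
    · exact hI k h1 (by omega)
    · exact hI _ (by omega) (by omega)
  · dsimp only
    rcases lt_trichotomy k i with h | rfl | h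
    · rw [if_pos h.le, if_pos (by omega)]
      exact hD k (by omega)
    · rw [if_pos le_rfl, if_neg (by omega), heq, show k + 1 + (j - k) = j + 1 by omega]
      exact hD j (by omega)
    · rw [if_neg (by omega), if_neg (by omega), show k + 1 + (j - i) = k + (j - i) + 1 by omega]
      exact hD _ (by omega)

/-- A walk through `I` from outside `I` to outside `I` can be made injective, provided its
source and target are distinguished by some predicate. -/
theorem exists_injective_walk {D : ℕ → ℕ → Prop} {I : Set ℕ} (p : ℕ → Prop)
    (hs : ∀ u v, D u v → u ∉ I → ¬ p u) (ht : ∀ u v, D u v → v ∉ I → p v)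
    (h : ∃ n z, IsWalkThrough D I n z ∧ 0 < n ∧ z n ∉ I) :
    ∃ n z, IsWalkThrough D I n z ∧ 0 < n ∧ z n ∉ I ∧
      ∀ i ≤ n, ∀ j ≤ n, z i = z j → i = j := by
  classical
  obtain ⟨z, hz, hn, hzn⟩ := Nat.find_spec h
  refine ⟨Nat.find h, z, hz, hn, hzn, ?_⟩
  have key : ∀ i j, i < j → j ≤ Nat.find h → z i ≠ z j := by
    intro i j hij hj heq
    have hne : 0 < i ∨ j < Nat.find h := by
      by_contra hcon
      have hi : i = 0 := by omega
      have hj' : j = Nat.find h := by omega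
      have hlast := hz.2.2 (Nat.find h - 1) (by omega)
      rw [Nat.sub_add_cancel hn] at hlast
      have h1 := hs _ _ (hz.2.2 0 hn) hz.1
      rw [hi, hj'] at heq
      exact h1 (heq ▸ ht _ _ hlast hzn)
    refine Nat.find_min h (m := Nat.find h - (j - i)) (by omega)
      ⟨_, hz.splice hij hj heq, by omega, ?_⟩
    split_ifs with hle
    · have hjn : j = Nat.find h := by omega
      rwa [show Nat.find h - (j - i) = i by omega, heq, hjn]
    · rwa [Nat.sub_add_cancel (by omega)]
  intro i hi j hj heq
  rcases lt_trichotomy i j with h' | h' | h'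
  · exact (key i j h' hj heq).elim
  · exact h'
  · exact (key j i h' hi heq.symm).elim

/-- Existence of complete alternating paths: if edges of `G` join names of opposite polarity,
edges of `H` do so after flipping polarities on `I`, and every subset `S` of `I` supports an
edge of `G` or its complement an edge of `H`, then some alternating path is complete. -/
theorem exists_complete_altPath (G H : BLGraph) (I X : Set ℕ) (p : ℕ → Prop)
    (hX : Disjoint X I)
    (hG : ∀ u v, G.relI I s(u, v) X → (p u ↔ ¬ p v))
    (hH : ∀ u v, H.relI I s(u, v) X → ((p u ↔ u ∉ I) ↔ ¬ (p v ↔ v ∉ I)))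
    (hcov : ∀ S : Set ℕ,
      (∃ u v, G.relI I s(u, v) X ∧ u ∈ X ∪ (I ∩ S) ∧ v ∈ X ∪ (I ∩ S)) ∨
      (∃ u v, H.relI I s(u, v) X ∧ u ∈ X ∪ (I \ S) ∧ v ∈ X ∪ (I \ S))) :
    ∃ n z, AltPath G H I X n z ∧ z 0 ∉ I ∧ z (n - 1) ∉ I := by
  let D : ℕ → ℕ → Prop := fun u v =>
    (G.relI I s(u, v) X ∧ ¬ p u ∧ p v) ∨
    (H.relI I s(u, v) X ∧ ¬ (p u ↔ u ∉ I) ∧ (p v ↔ v ∉ I))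
  have hs : ∀ u v, D u v → u ∉ I → ¬ p u := by
    rintro u v (⟨-, h, -⟩ | ⟨-, h, -⟩) hu <;> tauto
  have ht : ∀ u v, D u v → v ∉ I → p v := by
    rintro u v (⟨-, -, h⟩ | ⟨-, -, h⟩) hv <;> tauto
  have hwalk : ∃ n z, IsWalkThrough D I n z ∧ 0 < n ∧ z n ∉ I := by
    by_contra hcon
    push Not at hcon
    let R : ℕ → Prop := fun v => ∃ n z, IsWalkThrough D I n z ∧ z n = v
    have hR : ∀ u v, (u ∉ I ∨ R u) → D u v → R v ∧ v ∈ I := by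
      intro u v hu huv
      have hRu : R u := by
        rcases hu with hu | hu
        · exact ⟨0, fun _ => u, ⟨hu, fun i h1 h2 => by omega, fun i hi => by omega⟩, rfl⟩
        · exact hu
      obtain ⟨n, z, hz, rfl⟩ := hRu
      have hext := hz.extend (hcon n z hz) huv
      have hlast : Function.update z (n + 1) v (n + 1) = v := Function.update_self ..
      exact ⟨⟨n + 1, _, hext, hlast⟩, hlast ▸ hcon _ _ hext (Nat.succ_pos n)⟩
    have hXI : ∀ u ∈ X, u ∉ I := fun u hu => Set.disjoint_left.1 hX hu
    rcases hcov {y | p y ↔ ¬ R y} with ⟨u, v, he, hu, hv⟩ | ⟨u, v, he, hu, hv⟩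
    · have hbad : ∀ u v, G.relI I s(u, v) X → u ∈ X ∪ (I ∩ {y | p y ↔ ¬ R y}) →
          v ∈ X ∪ (I ∩ {y | p y ↔ ¬ R y}) → ¬ p u → p v → False := by
        intro u v he hu hv hpu hpv
        have hu' : u ∉ I ∨ R u := by
          rcases hu with hu | ⟨-, hu⟩
          · exact .inl (hXI u hu)
          · rw [Set.mem_ofPred_eq] at hu
            tauto
        obtain ⟨hRv, hvI⟩ := hR u v hu' (.inl ⟨he, hpu, hpv⟩)
        rcases hv with hv | ⟨-, hv⟩
        · exact hXI v hv hvI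
        · exact hv.1 hpv hRv
      by_cases hpu : p u
      · exact hbad v u (Sym2.eq_swap ▸ he) hv hu ((hG u v he).1 hpu) hpu
      · exact hbad u v he hu hv hpu (not_not.1 fun h => hpu ((hG u v he).2 h))
    · have hbad : ∀ u v, H.relI I s(u, v) X → u ∈ X ∪ (I \ {y | p y ↔ ¬ R y}) →
          v ∈ X ∪ (I \ {y | p y ↔ ¬ R y}) → ¬ (p u ↔ u ∉ I) → (p v ↔ v ∉ I) → False := by
        intro u v he hu hv hpu hpv
        have hu' : u ∉ I ∨ R u := by
          rcases hu with hu | ⟨huI, hu⟩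
          · exact .inl (hXI u hu)
          · rw [Set.mem_ofPred_eq] at hu
            tauto
        obtain ⟨hRv, hvI⟩ := hR u v hu' (.inr ⟨he, hpu, hpv⟩)
        rcases hv with hv | ⟨-, hv⟩
        · exact hXI v hv hvI
        · exact hv ⟨fun h => (hpv.1 h hvI).elim, fun h => (h hRv).elim⟩
      by_cases hpu : p u ↔ u ∉ I
      · exact hbad v u (Sym2.eq_swap ▸ he) hv hu ((hH u v he).1 hpu) hpu
      · exact hbad u v he hu hv hpu (not_not.1 fun h => hpu ((hH u v he).2 h))
  obtain ⟨n, z, ⟨h0, hI, hD⟩, hn, hzn, hinj⟩ := exists_injective_walk p hs ht hwalk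
  have hGH : ∀ i, i + 1 < n → p (z (i + 1)) →
      H.relI I s(z (i + 1), z (i + 1 + 1)) X ∧ ¬ p (z (i + 1 + 1)) ∨
      H.relI I s(z (i + 1), z (i + 1 + 1)) X ∧ i + 1 + 1 = n := by
    intro i hi hp
    have hin := hI (i + 1) (by omega) hi
    rcases hD (i + 1) hi with ⟨-, h, -⟩ | ⟨he, -, hv⟩
    · exact (h hp).elim
    · by_cases hlast : i + 1 + 1 = n
      · exact .inr ⟨he, hlast⟩
      · have := hI (i + 1 + 1) (by omega) (by omega)
        exact .inl ⟨he, by tauto⟩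
  have hHG : ∀ i, i + 1 < n → ¬ p (z (i + 1)) →
      G.relI I s(z (i + 1), z (i + 1 + 1)) X ∧ p (z (i + 1 + 1)) := by
    intro i hi hp
    have hin := hI (i + 1) (by omega) hi
    rcases hD (i + 1) hi with ⟨he, -, hv⟩ | ⟨-, h, -⟩
    · exact ⟨he, hv⟩
    · exact (h (by tauto)).elim
  have hinner : ∀ i, 0 < i → i + 1 < n + 1 → z i ∈ I := fun i h1 h2 => hI i h1 (by omega)
  have hinj' : ∀ i < n + 1, ∀ j < n + 1, z i = z j → i = j := fun i hi j hj =>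
    hinj i (by omega) j (by omega)
  refine ⟨n + 1, z, ⟨by omega, hinj', hinner, ?_⟩, h0, by simpa using hzn⟩
  rcases hD 0 hn with ⟨he, -, hv⟩ | ⟨he, -, hv⟩
  · left
    have key : ∀ i, i < n →
        (Even i → G.relI I s(z i, z (i + 1)) X ∧ p (z (i + 1))) ∧
        (¬ Even i → H.relI I s(z i, z (i + 1)) X ∧ (i + 1 < n → ¬ p (z (i + 1)))) := by
      intro i
      induction i with
      | zero => exact fun _ => ⟨fun _ => ⟨he, hv⟩, fun h => (h Even.zero).elim⟩
      | succ i ih =>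
        intro hi
        obtain ⟨ih1, ih2⟩ := ih (by omega)
        rw [Nat.even_add_one, not_not]
        refine ⟨fun h => hHG i hi ((ih2 h).2 hi), fun h => ?_⟩
        rcases hGH i hi (ih1 h).2 with ⟨h1, h2⟩ | ⟨h1, h2⟩
        · exact ⟨h1, fun _ => h2⟩
        · exact ⟨h1, fun h3 => by omega⟩
    exact fun i hi => ⟨fun h => ((key i (by omega)).1 h).1, fun h => ((key i (by omega)).2 h).1⟩
  · right
    have key : ∀ i, i < n →
        (Even i → H.relI I s(z i, z (i + 1)) X ∧ (i + 1 < n → ¬ p (z (i + 1)))) ∧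
        (¬ Even i → G.relI I s(z i, z (i + 1)) X ∧ p (z (i + 1))) := by
      intro i
      induction i with
      | zero =>
        refine fun _ => ⟨fun _ => ⟨he, fun h => ?_⟩, fun h => (h Even.zero).elim⟩
        have := hI (0 + 1) (by omega) h
        tauto
      | succ i ih =>
        intro hi
        obtain ⟨ih1, ih2⟩ := ih (by omega)
        rw [Nat.even_add_one, not_not]
        refine ⟨fun h => ?_, fun h => hHG i hi ((ih1 h).2 hi)⟩
        rcases hGH i hi (ih2 h).2 with ⟨h1, h2⟩ | ⟨h1, h2⟩
        · exact ⟨h1, fun _ => h2⟩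
        · exact ⟨h1, fun h3 => by omega⟩
    exact fun i hi => ⟨fun h => ((key i (by omega)).1 h).1, fun h => ((key i (by omega)).2 h).1⟩

/-- Along a complete path whose edges alternate between two relations, the first one joining
`f`-dual names and the second one `g`-dual names, the end points are dual. -/
theorem endpoints_dual {bar : α → α} (hbar : Function.Involutive bar) {I : Set ℕ}
    {f g : ℕ → α} {E F : ℕ → ℕ → Prop} (hI : ∀ x ∈ I, g x = bar (f x))
    (hO : ∀ x, x ∉ I → g x = f x) (hE : ∀ u v, E u v → f u = bar (f v))
    (hF : ∀ u v, F u v → g u = bar (g v)) {n : ℕ} {z : ℕ → ℕ} (hn : 1 < n)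
    (hin : ∀ i, 0 < i → i + 1 < n → z i ∈ I)
    (halt : ∀ i, i + 1 < n → (Even i → E (z i) (z (i + 1))) ∧ (¬ Even i → F (z i) (z (i + 1))))
    (h1 : z (n - 1) ∉ I) : f (z 0) = bar (f (z (n - 1))) := by
  have key : ∀ i, i + 1 < n →
      (Even i → f (z 0) = bar (f (z (i + 1)))) ∧ (¬ Even i → f (z 0) = bar (g (z (i + 1)))) := by
    intro i
    induction i with
    | zero => exact fun h => ⟨fun _ => hE _ _ ((halt 0 h).1 Even.zero), fun h => (h Even.zero).elim⟩
    | succ i ih =>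
      intro hi
      obtain ⟨ih1, ih2⟩ := ih (by omega)
      have hz := hin (i + 1) (by omega) hi
      obtain ⟨ha1, ha2⟩ := halt (i + 1) hi
      rw [Nat.even_add_one] at ha1 ha2 ⊢
      refine ⟨fun h => ?_, fun h => ?_⟩
      · rw [ih2 h, hI _ hz, hbar, hE _ _ (ha1 h)]
      · rw [ih1 (not_not.1 h), ← hI _ hz, hF _ _ (ha2 h)]
  have hlast := key (n - 2) (by omega)
  rw [show n - 2 + 1 = n - 1 by omega, hO _ h1] at hlast
  by_cases h : Even (n - 2)
  · exact hlast.1 h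
  · exact hlast.2 h

/-- A polarity for a fixpoint-free involution. -/
theorem exists_polarity {bar : α → α} (hbar : Function.Involutive bar) (hfix : ∀ a, bar a ≠ a) :
    ∃ pol : α → Prop, ∀ a, pol (bar a) ↔ ¬ pol a := by
  refine ⟨fun a => WellOrderingRel a (bar a), fun a => ?_⟩
  simp only [hbar a]
  constructor
  · exact fun h hlt => asymm h hlt
  · intro h
    rcases trichotomous_of WellOrderingRel a (bar a) with hlt | heq | hgt
    · exact (h hlt).elim
    · exact (hfix a heq.symm).elim
    · exact hgt

/-! ### Totality -/

/-- Totality in a form suited to induction: edges are contained in their labels and carry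
dual atoms. -/
structure StronglyTotal (bar : α → α) (G : BLGraph) (Γ : Finset (NForm α)) : Prop where
  verts : G.verts = snames Γ
  br : ∀ X, (∃ e, G.rel e X) ↔ X ∈ BrS Γ
  mem_label : ∀ e X, G.rel e X → ∀ v ∈ e, v ∈ X
  dual : ∀ x y X, G.rel s(x, y) X → ∃ a b, HasAtomS Γ x a ∧ HasAtomS Γ y b ∧ a = bar b

theorem StronglyTotal.total {bar : α → α} {G : BLGraph} {Γ : Finset (NForm α)}
    (h : StronglyTotal bar G Γ) (hΓ : SFSet Γ) : Total bar G Γ := by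
  refine ⟨h.verts, Set.ext h.br, ?_⟩
  rintro x y ⟨X, hX⟩ a b ha hb
  obtain ⟨a', b', ha', hb', hab⟩ := h.dual x y X hX
  rw [ha.unique hΓ ha', hb.unique hΓ hb', hab]

theorem blid_verts {bar : α → α} {A C : NForm α} (h : A.shape = (negF bar C).shape) :
    (blid A C).verts = A.names ∪ C.names := by
  induction A generalizing C with
  | atom x a =>
    cases C with
    | atom y b => rfl
    | or C D | and C D => simp [negF, NForm.shape] at h
  | or A B ihA ihB | and A B ihA ihB =>
    cases C with
    | atom y b => simp [negF, NForm.shape] at h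
    | or C D | and C D =>
      simp only [negF, NForm.shape, Shape.or.injEq, Shape.and.injEq, reduceCtorEq] at h
      all_goals
        simp only [blid, BLGraph.union, blwk, NForm.names, ihA h.1, ihB h.2]
        grind

theorem blid_br {bar : α → α} {A C : NForm α} (h : A.shape = (negF bar C).shape) (X : Set ℕ) :
    (∃ e, (blid A C).rel e X) ↔ ∃ Y ∈ BrF A, ∃ Z ∈ BrF C, X = Y ∪ Z := by
  induction A generalizing C X with
  | atom x a =>
    cases C with
    | atom y b => simp only [blid, BrF, Set.mem_singleton_iff, exists_eq_left, Set.insert_eq]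
    | or C D | and C D => simp [negF, NForm.shape] at h
  | or A B ihA ihB =>
    cases C with
    | atom y b => simp [negF, NForm.shape] at h
    | or C D => simp [negF, NForm.shape] at h
    | and C D =>
      simp only [negF, NForm.shape, Shape.or.injEq] at h
      replace ihA := ihA h.1
      replace ihB := ihB h.2
      simp only [blid, BLGraph.union, blwk, BrF]
      constructor
      · rintro ⟨e, ⟨Y, Z, he, hZ, rfl⟩ | ⟨Y, Z, he, hZ, rfl⟩⟩
        · obtain ⟨Y1, h1, Z1, h2, rfl⟩ := (ihA _).1 ⟨e, he⟩
          exact ⟨Y1 ∪ Z, ⟨Y1, h1, Z, hZ, rfl⟩, Z1, .inl h2, Set.union_right_comm ..⟩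
        · obtain ⟨Y1, h1, Z1, h2, rfl⟩ := (ihB _).1 ⟨e, he⟩
          exact ⟨Z ∪ Y1, ⟨Z, hZ, Y1, h1, rfl⟩, Z1, .inr h2,
            by rw [Set.union_right_comm, Set.union_comm Y1]⟩
      · rintro ⟨_, ⟨Y1, h1, Y2, h2, rfl⟩, Z, hZ | hZ, rfl⟩
        · obtain ⟨e, he⟩ := (ihA _).2 ⟨Y1, h1, Z, hZ, rfl⟩
          exact ⟨e, .inl ⟨_, Y2, he, h2, Set.union_right_comm ..⟩⟩
        · obtain ⟨e, he⟩ := (ihB _).2 ⟨Y2, h2, Z, hZ, rfl⟩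
          exact ⟨e, .inr ⟨_, Y1, he, h1, by rw [Set.union_assoc, Set.union_comm]⟩⟩
  | and A B ihA ihB =>
    cases C with
    | atom y b => simp [negF, NForm.shape] at h
    | and C D => simp [negF, NForm.shape] at h
    | or C D =>
      simp only [negF, NForm.shape, Shape.and.injEq] at h
      replace ihA := ihA h.1
      replace ihB := ihB h.2
      simp only [blid, BLGraph.union, blwk, BrF]
      constructor
      · rintro ⟨e, ⟨Y, Z, he, hZ, rfl⟩ | ⟨Y, Z, he, hZ, rfl⟩⟩
        · obtain ⟨Y1, h1, Z1, h2, rfl⟩ := (ihA _).1 ⟨e, he⟩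
          exact ⟨Y1, .inl h1, Z1 ∪ Z, ⟨Z1, h2, Z, hZ, rfl⟩, Set.union_assoc ..⟩
        · obtain ⟨Y1, h1, Z1, h2, rfl⟩ := (ihB _).1 ⟨e, he⟩
          exact ⟨Y1, .inr h1, Z ∪ Z1, ⟨Z, hZ, Z1, h2, rfl⟩,
            by rw [Set.union_assoc, Set.union_comm Z]⟩
      · rintro ⟨Y, hY | hY, _, ⟨Z1, h1, Z2, h2, rfl⟩, rfl⟩
        · obtain ⟨e, he⟩ := (ihA _).2 ⟨Y, hY, Z1, h1, rfl⟩
          exact ⟨e, .inl ⟨_, Z2, he, h2, (Set.union_assoc ..).symm⟩⟩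
        · obtain ⟨e, he⟩ := (ihB _).2 ⟨Y, hY, Z2, h2, rfl⟩
          exact ⟨e, .inr ⟨_, Z1, he, h1, by rw [Set.union_assoc, Set.union_comm Z1]⟩⟩

theorem blid_mem_label {A C : NForm α} {e : Sym2 ℕ} {X : Set ℕ} (he : (blid A C).rel e X) :
    ∀ v ∈ e, v ∈ X := by
  induction A generalizing C X with
  | atom x a =>
    cases C with
    | atom y b =>
      obtain ⟨rfl, rfl⟩ := he
      intro v hv
      simpa using hv
    | or C D | and C D => exact he.elim
  | or A B ihA ihB =>
    cases C with
    | atom y b | or C D => exact he.elim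
    | and C D =>
      rcases he with ⟨Y, Z, he, -, rfl⟩ | ⟨Y, Z, he, -, rfl⟩
      · exact fun v hv => .inl (ihA he v hv)
      · exact fun v hv => .inl (ihB he v hv)
  | and A B ihA ihB =>
    cases C with
    | atom y b | and C D => exact he.elim
    | or C D =>
      rcases he with ⟨Y, Z, he, -, rfl⟩ | ⟨Y, Z, he, -, rfl⟩
      · exact fun v hv => .inl (ihA he v hv)
      · exact fun v hv => .inl (ihB he v hv)

theorem blid_dual {bar : α → α} {A C : NForm α} (h : A.shape = (negF bar C).shape)
    {e : Sym2 ℕ} {X : Set ℕ} (he : (blid A C).rel e X) :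
    ∃ x y a, e = s(x, y) ∧ HasAtom A x (bar a) ∧ HasAtom C y a := by
  induction A generalizing C X with
  | atom x a =>
    cases C with
    | atom y b =>
      simp only [negF, NForm.shape, Shape.atom.injEq] at h
      exact ⟨x, y, b, he.1, ⟨rfl, h⟩, rfl, rfl⟩
    | or C D | and C D => exact he.elim
  | or A B ihA ihB =>
    cases C with
    | atom y b | or C D => exact he.elim
    | and C D =>
      simp only [negF, NForm.shape, Shape.or.injEq] at h
      rcases he with ⟨Y, Z, he, -, rfl⟩ | ⟨Y, Z, he, -, rfl⟩
      · obtain ⟨x, y, a, rfl, h1, h2⟩ := ihA h.1 he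
        exact ⟨x, y, a, rfl, .inl h1, .inl h2⟩
      · obtain ⟨x, y, a, rfl, h1, h2⟩ := ihB h.2 he
        exact ⟨x, y, a, rfl, .inr h1, .inr h2⟩
  | and A B ihA ihB =>
    cases C with
    | atom y b | and C D => exact he.elim
    | or C D =>
      simp only [negF, NForm.shape, Shape.and.injEq] at h
      rcases he with ⟨Y, Z, he, -, rfl⟩ | ⟨Y, Z, he, -, rfl⟩
      · obtain ⟨x, y, a, rfl, h1, h2⟩ := ihA h.1 he
        exact ⟨x, y, a, rfl, .inl h1, .inl h2⟩
      · obtain ⟨x, y, a, rfl, h1, h2⟩ := ihB h.2 he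
        exact ⟨x, y, a, rfl, .inr h1, .inr h2⟩

theorem stronglyTotal_ax {bar : α → α} (hbar : Function.Involutive bar)
    {Γ : Finset (NForm α)} {A C : NForm α} (h : A.shape = (negF bar C).shape)
    (hAC : Disjoint A.names C.names) (hA : Disjoint A.names (snames Γ))
    (hC : Disjoint C.names (snames Γ)) :
    StronglyTotal bar (blwk (snames Γ) (BrS Γ) (blid A C)) (insert A (insert C Γ)) where
  verts := by
    simp only [blwk, blid_verts h, snames_insert, Set.union_assoc]
  br X := by
    have hA' : Disjoint A.names (snames (insert C Γ)) := by
      rw [snames_insert]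
      exact Set.disjoint_union_right.2 ⟨hAC, hA⟩
    rw [mem_BrS_insert hA']
    constructor
    · rintro ⟨e, Y, Z, he, hZ, rfl⟩
      obtain ⟨Y1, h1, Y2, h2, rfl⟩ := (blid_br h _).1 ⟨e, he⟩
      exact ⟨Y1, h1, Y2 ∪ Z, (mem_BrS_insert hC).2 ⟨Y2, h2, Z, hZ, rfl⟩, Set.union_assoc ..⟩
    · rintro ⟨Y1, h1, W, hW, rfl⟩
      obtain ⟨Y2, h2, Z, hZ, rfl⟩ := (mem_BrS_insert hC).1 hW
      obtain ⟨e, he⟩ := (blid_br h _).2 ⟨Y1, h1, Y2, h2, rfl⟩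
      exact ⟨e, _, Z, he, hZ, (Set.union_assoc ..).symm⟩
  mem_label := by
    rintro e X ⟨Y, Z, he, -, rfl⟩ v hv
    exact .inl (blid_mem_label he v hv)
  dual := by
    rintro x y X ⟨Y, Z, he, -, rfl⟩
    obtain ⟨x', y', a, heq, h1, h2⟩ := blid_dual h he
    have h1' : HasAtomS (insert A (insert C Γ)) x' (bar a) := ⟨A, by simp, h1⟩
    have h2' : HasAtomS (insert A (insert C Γ)) y' a := ⟨C, by simp, h2⟩
    rcases Sym2.eq_iff.1 heq with ⟨rfl, rfl⟩ | ⟨rfl, rfl⟩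
    · exact ⟨bar a, a, h1', h2', rfl⟩
    · exact ⟨a, bar a, h2', h1', (hbar a).symm⟩

theorem StronglyTotal.union_same {bar : α → α} {G H : BLGraph} {Γ : Finset (NForm α)}
    (hG : StronglyTotal bar G Γ) (hH : StronglyTotal bar H Γ) :
    StronglyTotal bar (G.union H) Γ where
  verts := by simp only [BLGraph.union, hG.verts, hH.verts, Set.union_self]
  br X := by simp only [BLGraph.union, exists_or, hG.br, hH.br, or_self]
  mem_label e X h := h.elim (hG.mem_label e X) (hH.mem_label e X)
  dual x y X h := h.elim (hG.dual x y X) (hH.dual x y X)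

theorem StronglyTotal.or {bar : α → α} {G : BLGraph} {Γ : Finset (NForm α)} {A B : NForm α}
    (hG : StronglyTotal bar G (insert A (insert B Γ))) (hAB : Disjoint A.names B.names)
    (hA : Disjoint A.names (snames Γ)) (hB : Disjoint B.names (snames Γ)) :
    StronglyTotal bar G (insert (NForm.or A B) Γ) where
  verts := by
    rw [hG.verts]
    simp only [snames_insert, NForm.names, Set.union_assoc]
  br X := by
    have hA' : Disjoint A.names (snames (insert B Γ)) := by
      rw [snames_insert]
      exact Set.disjoint_union_right.2 ⟨hAB, hA⟩
    have hO : Disjoint (NForm.or A B).names (snames Γ) := Set.disjoint_union_left.2 ⟨hA, hB⟩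
    rw [hG.br, mem_BrS_insert hA', mem_BrS_insert hO]
    constructor
    · rintro ⟨Y, hY, W, hW, rfl⟩
      obtain ⟨Z, hZ, V, hV, rfl⟩ := (mem_BrS_insert hB).1 hW
      exact ⟨Y ∪ Z, ⟨Y, hY, Z, hZ, rfl⟩, V, hV, (Set.union_assoc ..).symm⟩
    · rintro ⟨_, ⟨Y, hY, Z, hZ, rfl⟩, V, hV, rfl⟩
      exact ⟨Y, hY, Z ∪ V, (mem_BrS_insert hB).2 ⟨Z, hZ, V, hV, rfl⟩, Set.union_assoc ..⟩
  mem_label := hG.mem_label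
  dual x y X h := by
    have key : ∀ x a, HasAtomS (insert A (insert B Γ)) x a →
        HasAtomS (insert (NForm.or A B) Γ) x a := by
      rintro x a ⟨D, hD, ha⟩
      simp only [Finset.mem_insert] at hD
      rcases hD with rfl | rfl | hD
      · exact ⟨_, Finset.mem_insert_self .., .inl ha⟩
      · exact ⟨_, Finset.mem_insert_self .., .inr ha⟩
      · exact ⟨D, Finset.mem_insert_of_mem hD, ha⟩
    obtain ⟨a, b, ha, hb, hab⟩ := hG.dual x y X h
    exact ⟨a, b, key x a ha, key y b hb, hab⟩

theorem StronglyTotal.and {bar : α → α} {G H : BLGraph} {Γ : Finset (NForm α)} {A B : NForm α}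
    (hG : StronglyTotal bar G (insert A Γ)) (hH : StronglyTotal bar H (insert B Γ))
    (hA : Disjoint A.names (snames Γ)) (hB : Disjoint B.names (snames Γ)) :
    StronglyTotal bar (G.union H) (insert (NForm.and A B) Γ) where
  verts := by
    simp only [BLGraph.union, hG.verts, hH.verts, snames_insert, NForm.names]
    exact (Set.union_union_distrib_right ..).symm
  br X := by
    have hO : Disjoint (NForm.and A B).names (snames Γ) := Set.disjoint_union_left.2 ⟨hA, hB⟩
    simp only [BLGraph.union, exists_or, hG.br, hH.br, mem_BrS_insert hA, mem_BrS_insert hB,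
      mem_BrS_insert hO, BrF, Set.mem_union, or_and_right]
  mem_label e X h := h.elim (hG.mem_label e X) (hH.mem_label e X)
  dual x y X h := by
    have keyA : ∀ x a, HasAtomS (insert A Γ) x a → HasAtomS (insert (NForm.and A B) Γ) x a := by
      rintro x a ⟨D, hD, ha⟩
      rcases Finset.mem_insert.1 hD with rfl | hD
      · exact ⟨_, Finset.mem_insert_self .., .inl ha⟩
      · exact ⟨D, Finset.mem_insert_of_mem hD, ha⟩
    have keyB : ∀ x a, HasAtomS (insert B Γ) x a → HasAtomS (insert (NForm.and A B) Γ) x a := by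
      rintro x a ⟨D, hD, ha⟩
      rcases Finset.mem_insert.1 hD with rfl | hD
      · exact ⟨_, Finset.mem_insert_self .., .inr ha⟩
      · exact ⟨D, Finset.mem_insert_of_mem hD, ha⟩
    rcases h with h | h
    · obtain ⟨a, b, ha, hb, hab⟩ := hG.dual x y X h
      exact ⟨a, b, keyA x a ha, keyA y b hb, hab⟩
    · obtain ⟨a, b, ha, hb, hab⟩ := hH.dual x y X h
      exact ⟨a, b, keyB x a ha, keyB y b hb, hab⟩

/-- Labels of a graph total for `Γ, A` restrict, away from `A`, to branches of `Γ`. -/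
theorem StronglyTotal.relI_mem {bar : α → α} {G : BLGraph} {Γ : Finset (NForm α)} {A : NForm α}
    (hG : StronglyTotal bar G (insert A Γ)) (hA : Disjoint A.names (snames Γ))
    {e : Sym2 ℕ} {X : Set ℕ} (h : G.relI A.names e X) :
    X ∈ BrS Γ ∧ ∀ v ∈ e, v ∉ A.names → v ∈ X := by
  obtain ⟨Y, hY, rfl⟩ := h
  refine ⟨?_, fun v hv hvA => ⟨hG.mem_label e Y hY v hv, hvA⟩⟩
  obtain ⟨Y1, h1, Z, hZ, rfl⟩ := (mem_BrS_insert hA).1 ((hG.br Y).1 ⟨e, hY⟩)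
  rw [Set.union_sdiff_distrib, Set.sdiff_eq_empty.2 (subset_names_of_mem_BrF h1), Set.empty_union,
    (hA.symm.mono_left hZ.1).sdiff_eq_left]
  exact hZ

/-- A graph total for `Γ, A` has an edge supported by any branch of `Γ` and any branch of `A`. -/
theorem StronglyTotal.exists_relI {bar : α → α} {G : BLGraph} {Γ : Finset (NForm α)}
    {A : NForm α} (hG : StronglyTotal bar G (insert A Γ)) (hA : Disjoint A.names (snames Γ))
    {X Y : Set ℕ} (hX : X ∈ BrS Γ) (hY : Y ∈ BrF A) :
    ∃ u v, G.relI A.names s(u, v) X ∧ u ∈ X ∪ Y ∧ v ∈ X ∪ Y := by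
  obtain ⟨e, he⟩ := (hG.br (Y ∪ X)).2 ((mem_BrS_insert hA).2 ⟨Y, hY, X, hX, rfl⟩)
  induction e using Sym2.ind with
  | _ u v =>
    rw [Set.union_comm X Y]
    refine ⟨u, v, ⟨_, he, ?_⟩, hG.mem_label _ _ he u (Sym2.mem_mk_left u v),
      hG.mem_label _ _ he v (Sym2.mem_mk_right u v)⟩
    rw [Set.union_sdiff_distrib, Set.sdiff_eq_empty.2 (subset_names_of_mem_BrF hY), Set.empty_union,
      (hA.symm.mono_left hX.1).sdiff_eq_left]

/-- Edges are dual with respect to any assignment of atoms to names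
which agrees with the sequent. -/
theorem StronglyTotal.dual_of_agree {bar : α → α} {G : BLGraph} {Γ : Finset (NForm α)}
    (hG : StronglyTotal bar G Γ) {f : ℕ → α}
    (hf : ∀ x a, HasAtomS Γ x a → f x = a) {I X : Set ℕ} {u v : ℕ}
    (h : G.relI I s(u, v) X) : f u = bar (f v) := by
  obtain ⟨Y, hY, -⟩ := h
  obtain ⟨a, b, ha, hb, hab⟩ := hG.dual u v Y hY
  rw [hf u a ha, hf v b hb, hab]

theorem NForm.nonempty_atoms (A : NForm α) : Nonempty α := by
  induction A with
  | atom x a => exact ⟨a⟩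
  | or A B ihA ihB => exact ihA
  | and A B ihA ihB => exact ihA

theorem StronglyTotal.cut {bar : α → α} (hbar : Function.Involutive bar)
    (hfix : ∀ a, bar a ≠ a) {G H : BLGraph} {Γ : Finset (NForm α)} {A : NForm α}
    (hG : StronglyTotal bar G (insert A Γ)) (hH : StronglyTotal bar H (insert (negF bar A) Γ))
    (hAsf : A.sharingFree) (hΓ : SFSet Γ) (hA : Disjoint A.names (snames Γ)) :
    StronglyTotal bar (G.comp H A.names) Γ := by
  classical
  obtain ⟨pol, hpol⟩ := exists_polarity hbar hfix
  have hnA := names_negF bar A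
  have hA' : Disjoint (negF bar A).names (snames Γ) := by rwa [hnA]
  have hsfG : SFSet (insert A Γ) := hΓ.insert hAsf hA
  have hsfH : SFSet (insert (negF bar A) Γ) := hΓ.insert (NForm.sharingFree_negF bar hAsf) hA'
  obtain ⟨f, hf⟩ : ∃ f : ℕ → α, ∀ x a, HasAtomS (insert A Γ) x a → f x = a := by
    obtain ⟨a₀⟩ := A.nonempty_atoms
    have : ∀ x, ∃ c, ∀ a, HasAtomS (insert A Γ) x a → c = a := by
      intro x
      by_cases hx : ∃ c, HasAtomS (insert A Γ) x c
      · obtain ⟨c, hc⟩ := hx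
        exact ⟨c, fun a ha => hc.unique hsfG ha⟩
      · exact ⟨a₀, fun a ha => (hx ⟨a, ha⟩).elim⟩
    choose f hf using this
    exact ⟨f, hf⟩
  let g : ℕ → α := fun x => if x ∈ A.names then bar (f x) else f x
  have hgI : ∀ x ∈ A.names, g x = bar (f x) := fun x hx => if_pos hx
  have hgO : ∀ x, x ∉ A.names → g x = f x := fun x hx => if_neg hx
  have hg : ∀ x a, HasAtomS (insert (negF bar A) Γ) x a → g x = a := by
    rintro x a hx
    by_cases hxA : x ∈ A.names
    · obtain ⟨c, hc⟩ := (mem_names_iff_hasAtom A x).1 hxA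
      rw [hgI x hxA, hf x c ⟨A, Finset.mem_insert_self .., hc⟩]
      exact HasAtomS.unique hsfH ⟨_, Finset.mem_insert_self .., hc.negF bar⟩ hx
    · rw [hgO x hxA]
      obtain ⟨D, hD, hDa⟩ := hx
      rcases Finset.mem_insert.1 hD with rfl | hD
      · exact (hxA (hnA ▸ hDa.mem_names)).elim
      · exact hf x a ⟨D, Finset.mem_insert_of_mem hD, hDa⟩
  have hGd : ∀ X u v, G.relI A.names s(u, v) X → f u = bar (f v) := fun X u v h =>
    hG.dual_of_agree hf h
  have hHd : ∀ X u v, H.relI A.names s(u, v) X → g u = bar (g v) := fun X u v h =>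
    hH.dual_of_agree hg h
  have hGm : ∀ e X, G.relI A.names e X → X ∈ BrS Γ ∧ ∀ v ∈ e, v ∉ A.names → v ∈ X :=
    fun e X h => hG.relI_mem hA h
  have hHm : ∀ e X, H.relI A.names e X → X ∈ BrS Γ ∧ ∀ v ∈ e, v ∉ A.names → v ∈ X :=
    fun e X h => hnA ▸ hH.relI_mem hA' (hnA.symm ▸ h)
  have hedge : ∀ n z X, AltPath G H A.names X n z → ∀ i, i + 1 < n →
      G.relI A.names s(z i, z (i + 1)) X ∨ H.relI A.names s(z i, z (i + 1)) X := by
    rintro n z X ⟨-, -, -, h | h⟩ i hi <;> by_cases he : Even i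
    · exact .inl ((h i hi).1 he)
    · exact .inr ((h i hi).2 he)
    · exact .inr ((h i hi).1 he)
    · exact .inl ((h i hi).2 he)
  have hedgem : ∀ n z X, AltPath G H A.names X n z → ∀ i, i + 1 < n →
      X ∈ BrS Γ ∧ ∀ v ∈ s(z i, z (i + 1)), v ∉ A.names → v ∈ X := fun n z X h i hi =>
    (hedge n z X h i hi).elim (hGm _ X) (hHm _ X)
  have hends : ∀ n z X, AltPath G H A.names X n z → z 0 ∉ A.names → z (n - 1) ∉ A.names →
      z 0 ∈ X ∧ z (n - 1) ∈ X := by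
    intro n z X h h0 h1
    have hn := h.1
    refine ⟨(hedgem n z X h 0 (by omega)).2 _ (Sym2.mem_mk_left _ _) h0, ?_⟩
    have hlast := (hedgem n z X h (n - 2) (by omega)).2 _ (Sym2.mem_mk_right _ _)
    rw [show n - 2 + 1 = n - 1 by omega] at hlast
    exact hlast h1
  have hdual : ∀ n z X, AltPath G H A.names X n z → z 0 ∉ A.names → z (n - 1) ∉ A.names →
      f (z 0) = bar (f (z (n - 1))) := by
    rintro n z X ⟨hn, -, hin, h | h⟩ h0 h1
    · exact endpoints_dual hbar hgI hgO (hGd X) (hHd X) hn hin h h1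
    · have := endpoints_dual hbar (f := g) (g := f) (fun x hx => by rw [hgI x hx, hbar])
        (fun x hx => (hgO x hx).symm) (hHd X) (hGd X) hn hin h h1
      rwa [hgO _ h0, hgO _ h1] at this
  refine ⟨?_, fun X => ⟨?_, fun hX => ?_⟩, ?_, ?_⟩
  · simp only [BLGraph.comp, hG.verts, hH.verts, snames_insert, hnA, Set.union_self]
    rw [Set.union_sdiff_left, hA.symm.sdiff_eq_left]
  · rintro ⟨e, n, z, h, -⟩
    exact (hedgem n z X h 0 (by have := h.1; omega)).1
  · have hXA : Disjoint X A.names := hA.symm.mono_left hX.1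
    obtain ⟨n, z, h, h0, h1⟩ := exists_complete_altPath G H A.names X (fun x => pol (f x)) hXA
      (fun u v h => by rw [hGd X u v h, hpol])
      (fun u v h => by
        have key : ∀ x, (pol (f x) ↔ x ∉ A.names) ↔ pol (g x) := by
          intro x
          by_cases hx : x ∈ A.names
          · rw [hgI x hx, hpol]
            tauto
          · rw [hgO x hx]
            tauto
        rw [key, key, hHd X u v h, hpol])
      (fun S => by
        rcases exists_branch_subset_or_compl bar A S with ⟨Y, hY, hYS⟩ | ⟨Y, hY, hYS⟩
        · obtain ⟨u, v, h, hu, hv⟩ := hG.exists_relI hA hX hY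
          have hsub : X ∪ Y ⊆ X ∪ (A.names ∩ S) := Set.union_subset_union_right X
            (Set.subset_inter (subset_names_of_mem_BrF hY) hYS)
          exact .inl ⟨u, v, h, hsub hu, hsub hv⟩
        · obtain ⟨u, v, h, hu, hv⟩ := hH.exists_relI hA' hX hY
          have hsub : X ∪ Y ⊆ X ∪ (A.names \ S) := Set.union_subset_union_right X
            (Set.subset_inter (hnA ▸ subset_names_of_mem_BrF hY) hYS)
          exact .inr ⟨u, v, hnA ▸ h, hsub hu, hsub hv⟩)
    exact ⟨_, n, z, h, h0, h1, rfl⟩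
  · rintro e X ⟨n, z, h, h0, h1, rfl⟩ v hv
    obtain ⟨hz0, hz1⟩ := hends n z X h h0 h1
    rcases Sym2.mem_iff.1 hv with rfl | rfl
    · exact hz0
    · exact hz1
  · rintro x y X ⟨n, z, h, h0, h1, heq⟩
    obtain ⟨hz0, hz1⟩ := hends n z X h h0 h1
    have hXΓ := (hedgem n z X h 0 (by have := h.1; omega)).1.1
    have hd := hdual n z X h h0 h1
    have hat : ∀ x ∈ X, HasAtomS Γ x (f x) := by
      intro x hx
      obtain ⟨a, ha⟩ := (mem_snames_iff_hasAtomS Γ x).1 (hXΓ hx)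
      rwa [hf x a (ha.mono (Finset.subset_insert A Γ))]
    rcases Sym2.eq_iff.1 heq with ⟨rfl, rfl⟩ | ⟨rfl, rfl⟩
    · exact ⟨_, _, hat _ hz0, hat _ hz1, hd⟩
    · exact ⟨_, _, hat _ hz1, hat _ hz0, by rw [hd, hbar]⟩

theorem stronglyTotal_blaxg {bar : α → α} (hbar : Function.Involutive bar)
    (hfix : ∀ a, bar a ≠ a) (P : Deriv α) (hP : WF bar P) :
    SFSet (concl P) ∧ StronglyTotal bar (blaxg P) (concl P) := by
  induction P with
  | ax Γ A C =>
    obtain ⟨h, hA, hC, hΓ, hAC, hAΓ, hCΓ⟩ := hP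
    refine ⟨(hΓ.insert hC hCΓ).insert hA ?_, stronglyTotal_ax hbar h hAC hAΓ hCΓ⟩
    rw [snames_insert]
    exact Set.disjoint_union_right.2 ⟨hAC, hAΓ⟩
  | cut A P Q ihP ihQ =>
    obtain ⟨hP, hQ, Γ, hA, -, hcP, hcQ, hAsf, hΓ, hd⟩ := hP
    have hc : concl (.cut A P Q) = Γ := by rw [concl, hcP, Finset.erase_insert hA]
    rw [hc]
    exact ⟨hΓ, (hcP ▸ (ihP hP).2).cut hbar hfix (hcQ ▸ (ihQ hQ).2) hAsf hΓ hd⟩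
  | sup P Q ihP ihQ =>
    obtain ⟨hP, hQ, hc⟩ := hP
    exact ⟨(ihP hP).1, (ihP hP).2.union_same (hc ▸ (ihQ hQ).2)⟩
  | orI A B P ih =>
    obtain ⟨hP, Γ, hA, hB, hne, hcP, hAsf, hBsf, hΓ, hAB, hAΓ, hBΓ⟩ := hP
    have hc : concl (.orI A B P) = insert (NForm.or A B) Γ := by
      rw [concl, hcP, Finset.erase_insert (by simp [hA, hne]), Finset.erase_insert hB]
    rw [hc]
    exact ⟨hΓ.insert ⟨hAsf, hBsf, hAB⟩ (Set.disjoint_union_left.2 ⟨hAΓ, hBΓ⟩),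
      (hcP ▸ (ih hP).2).or hAB hAΓ hBΓ⟩
  | andI A B P Q ihP ihQ =>
    obtain ⟨hP, hQ, Γ, hA, hB, hcP, hcQ, hAsf, hBsf, hΓ, hAB, hAΓ, hBΓ⟩ := hP
    have hc : concl (.andI A B P Q) = insert (NForm.and A B) Γ := by
      rw [concl, hcP, Finset.erase_insert hA]
    rw [hc]
    exact ⟨hΓ.insert ⟨hAsf, hBsf, hAB⟩ (Set.disjoint_union_left.2 ⟨hAΓ, hBΓ⟩),
      (hcP ▸ (ihP hP).2).and (hcQ ▸ (ihQ hQ).2) hAΓ hBΓ⟩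

end GS4

/-- Desequentialization: the branch-labeled axiom graph of a
derivation is total w.r.t. its conclusion. -/
theorem GS4.desequentialization {α : Type} (bar : α → α)
    (hbar : Function.Involutive bar) (hfix : ∀ a, bar a ≠ a)
    (P : GS4.Deriv α) (hP : GS4.WF bar P) :
    GS4.Total bar (GS4.blaxg P) (GS4.concl P) :=
  have h := GS4.stronglyTotal_blaxg hbar hfix P hP
  h.2.total h.1
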